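/- For every g ∈ G, the determinant of (the matrix underlying) g satisfies det(g)^r = 1. -/

import Mathlib

/-!
Let `F` be the Fourier matrix of `ZMod r`. Orthogonality of characters gives `F ^ 2 = r • P` with
`P` the permutation matrix of negation, a product of `(r - 1) / 2` transpositions, so
`det F ^ 2 = (-1) ^ ((r - 1) / 2) * r ^ r`. Hence `det F ^ (r - 1) = ((-r) ^ ((r - 1) / 2)) ^ r`;
since `det F ≠ 0` by linear independence of characters, this says exactly that the scalar `λ`
normalises `F` to determinant `1`. The generator `λ C_t` is a direct sum of copies of `λ F`, so it
has determinant `1` too, while the remaining generators are diagonal with entries powers of `θ`.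
-/

section Negation

lemma neg_eq_self_iff_of_odd_card {A : Type*} [AddGroup A] (hA : Odd (Nat.card A)) {a : A} :
    -a = a ↔ a = 0 := by
  refine ⟨fun h => ?_, fun h => by rw [h, neg_zero]⟩
  have two_nsmul_eq_zero : 2 • a = 0 := by rw [two_nsmul, ← neg_eq_iff_add_eq_zero, h]
  have order_dvd : addOrderOf a ∣ Nat.gcd (Nat.card A) 2 :=
    Nat.dvd_gcd (addOrderOf_dvd_natCard a) (addOrderOf_dvd_of_nsmul_eq_zero two_nsmul_eq_zero)
  rwa [hA.coprime_two_right.gcd_eq_one, Nat.dvd_one, AddMonoid.addOrderOf_eq_one_iff] at order_dvd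

lemma sign_neg_of_odd_card {A : Type*} [AddGroup A] [Fintype A] [DecidableEq A]
    (hA : Odd (Fintype.card A)) :
    Equiv.Perm.sign (Equiv.neg A) = (-1) ^ ((Fintype.card A - 1) / 2) := by
  have neg_sq : Equiv.neg A ^ 2 = 1 := by
    ext a
    simp [pow_two]
  have card_fixedPoints : Fintype.card (Function.fixedPoints (Equiv.neg A)) = 1 := by
    rw [← Nat.card_eq_fintype_card] at hA
    refine Fintype.card_eq_one_iff.2 ⟨⟨0, neg_zero⟩, fun ⟨a, ha⟩ => Subtype.ext ?_⟩
    exact (neg_eq_self_iff_of_odd_card hA).1 ha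
  rw [Equiv.Perm.sign_of_pow_two_eq_one neg_sq, card_fixedPoints]

end Negation

section FourierMatrix

variable {R K : Type*} [CommRing R]

/-- The Fourier matrix `(ψ (i * j))` of a ring with respect to an additive character `ψ`.
The matrix `C` of the theorem is the case `R = ZMod r`, `ψ n = θ ^ n.val`. -/
def fourierMatrix [Monoid K] (ψ : AddChar R K) : Matrix R R K :=
  Matrix.of fun i j => ψ (i * j)

lemma fourierMatrix_zmodChar {r : ℕ} [NeZero r] [CommMonoid K] {θ : K} (hθ : θ ^ r = 1)
    (i j : ZMod r) :
    fourierMatrix (AddChar.zmodChar r hθ) i j = θ ^ (i * j).val :=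
  AddChar.zmodChar_apply hθ _

variable [Fintype R] [DecidableEq R]

lemma fourierMatrix_mul_self [CommRing K] [IsDomain K] {ψ : AddChar R K} (hψ : ψ.IsPrimitive) :
    fourierMatrix ψ * fourierMatrix ψ =
      (Fintype.card R : K) • (Equiv.neg R).permMatrix K := by
  ext i j
  calc (fourierMatrix ψ * fourierMatrix ψ) i j
      = ∑ k, ψ (k * (i + j)) := by
        refine Finset.sum_congr rfl fun k _ => ?_
        rw [mul_add, AddChar.map_add_eq_mul, mul_comm k i]
        rfl
    _ = if i + j = 0 then (Fintype.card R : K) else 0 := by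
        exact_mod_cast AddChar.sum_mulShift (i + j) hψ
    _ = ((Fintype.card R : K) • (Equiv.neg R).permMatrix K) i j := by
        simp [Equiv.Perm.permMatrix, PEquiv.toMatrix_apply, neg_eq_iff_add_eq_zero]

lemma fourierMatrix_det_sq [CommRing K] [IsDomain K] {ψ : AddChar R K} (hψ : ψ.IsPrimitive)
    (hR : Odd (Fintype.card R)) :
    (fourierMatrix ψ).det ^ 2 =
      (-1) ^ ((Fintype.card R - 1) / 2) * (Fintype.card R : K) ^ Fintype.card R := by
  rw [sq, ← Matrix.det_mul, fourierMatrix_mul_self hψ, Matrix.det_smul, Matrix.det_permutation,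
    sign_neg_of_odd_card hR, mul_comm]
  push_cast
  rfl

lemma fourierMatrix_det_ne_zero [Field K] {ψ : AddChar R K} (hψ : ψ.IsPrimitive) :
    (fourierMatrix ψ).det ≠ 0 := by
  have rows_independent : LinearIndependent K (fourierMatrix ψ).row :=
    (linearIndependent_monoidHom (Multiplicative R) K).comp
      (fun i => (ψ.mulShift i).toMonoidHom)
      (AddChar.toMonoidHomEquiv.injective.comp (AddChar.to_mulShift_inj_of_isPrimitive hψ))
  rw [← isUnit_iff_ne_zero, ← Matrix.isUnit_iff_isUnit_det]
  exact Matrix.linearIndependent_rows_iff_isUnit.1 rows_independent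

lemma fourierMatrix_det_pow_card_sub_one [CommRing K] [IsDomain K] {ψ : AddChar R K}
    (hψ : ψ.IsPrimitive) (hR : Odd (Fintype.card R)) :
    (fourierMatrix ψ).det ^ (Fintype.card R - 1) =
      ((-(Fintype.card R : K)) ^ ((Fintype.card R - 1) / 2)) ^ Fintype.card R := by
  have det_sq := fourierMatrix_det_sq hψ hR
  obtain ⟨k, hk⟩ := hR
  have half : (Fintype.card R - 1) / 2 = k := by omega
  have double : Fintype.card R - 1 = 2 * k := by omega
  -- `k * k` and `k * r = k * k + k * (k + 1)` have the same parity
  have sign_eq : ((-1 : K) ^ k) ^ k = ((-1) ^ k) ^ Fintype.card R := by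
    rw [← pow_mul, ← pow_mul, neg_one_pow_congr]
    simp only [hk, Nat.even_mul, Nat.even_add_one, even_two, true_or, not_true]
    tauto
  rw [half] at det_sq ⊢
  rw [double, pow_mul, det_sq, mul_pow, sign_eq, neg_pow (Fintype.card R : K),
    mul_pow, pow_right_comm (Fintype.card R : K)]

lemma det_smul_fourierMatrix_eq_one [Field K] {ψ : AddChar R K} (hψ : ψ.IsPrimitive)
    (hR : Odd (Fintype.card R)) :
    (((-(Fintype.card R : K)) ^ ((Fintype.card R - 1) / 2) * (fourierMatrix ψ).det⁻¹) •
      fourierMatrix ψ).det = 1 := by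
  rw [Matrix.det_smul, mul_pow, ← fourierMatrix_det_pow_card_sub_one hψ hR, mul_right_comm,
    pow_sub_one_mul Fintype.card_ne_zero, inv_pow,
    mul_inv_cancel₀ (pow_ne_zero _ (fourierMatrix_det_ne_zero hψ))]

end FourierMatrix

section Determinants

variable {n K : Type*} [Fintype n] [DecidableEq n] [CommRing K]

lemma det_diagonal_pow_pow_eq_one {θ : K} {m : ℕ} (hθ : θ ^ m = 1) (f : n → ℕ) :
    (Matrix.diagonal fun i => θ ^ f i).det ^ m = 1 := by
  rw [Matrix.det_diagonal, Finset.prod_pow_eq_pow_sum, pow_right_comm, hθ, one_pow]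

lemma det_pow_eq_one_of_mem_closure {S : Set (Matrix n n K)ˣ} {m : ℕ}
    (hS : ∀ x ∈ S, (x : Matrix n n K).det ^ m = 1) {g : (Matrix n n K)ˣ}
    (hg : g ∈ Subgroup.closure S) : (g : Matrix n n K).det ^ m = 1 := by
  have closure_le : Subgroup.closure S ≤
      (rootsOfUnity m K).comap (Units.map Matrix.detMonoidHom) :=
    (Subgroup.closure_le _).2 fun x hx => (mem_rootsOfUnity' m _).2 (hS x hx)
  exact (mem_rootsOfUnity' m _).1 (closure_le hg)

end Determinants

section ActOnCoord

variable {ι α K : Type*} [Fintype ι] [DecidableEq ι] [DecidableEq α]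

/-- The matrix `A` acting on the `t`-th factor of the tensor power `(K ^ α) ^ ⊗ ι`, whose basis is
indexed by `ι → α`, and trivially on the other factors. -/
def actOnCoord [Zero K] (t : ι) (A : Matrix α α K) : Matrix (ι → α) (ι → α) K :=
  Matrix.of fun η ξ => if ∀ i, i ≠ t → η i = ξ i then A (η t) (ξ t) else 0

lemma smul_actOnCoord {S : Type*} [Zero K] [SMulZeroClass S K] (c : S) (t : ι)
    (A : Matrix α α K) : c • actOnCoord t A = actOnCoord t (c • A) := by
  ext η ξ
  simp [actOnCoord]

lemma actOnCoord_eq_submatrix_blockDiagonal [Zero K] (t : ι) (A : Matrix α α K) :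
    actOnCoord t A = (Matrix.blockDiagonal fun _ : {j // j ≠ t} → α => A).submatrix
      (Equiv.funSplitAt t α) (Equiv.funSplitAt t α) := by
  ext η ξ
  simp [actOnCoord, Matrix.blockDiagonal_apply, funext_iff]

lemma det_actOnCoord [Fintype α] [CommRing K] (t : ι) (A : Matrix α α K) :
    (actOnCoord t A).det = A.det ^ Fintype.card α ^ (Fintype.card ι - 1) := by
  rw [actOnCoord_eq_submatrix_blockDiagonal, Matrix.det_submatrix_equiv_self,
    Matrix.det_blockDiagonal, Finset.prod_const, Finset.card_univ, Fintype.card_fun,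
    Fintype.card_subtype_compl, Fintype.card_subtype_eq]

end ActOnCoord

theorem weil_detG_pow_r_general
    {r : ℕ} [NeZero r] (hr : Odd r)
    {𝔽 : Type*} [Field 𝔽] {θ : 𝔽} (hθ : IsPrimitiveRoot θ r)
    {ι : Type*} [Fintype ι] [DecidableEq ι] [LT ι]
    (Cb : Matrix (ZMod r) (ZMod r) 𝔽)
    (hCb : ∀ i j : ZMod r, Cb i j = θ ^ (i * j).val)
    (lam : 𝔽) (hlam : lam = (-(r : 𝔽)) ^ ((r - 1) / 2) * Cb.det⁻¹)
    (uC uU : ι → (Matrix (ι → ZMod r) (ι → ZMod r) 𝔽)ˣ)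
    (uD : ι → ι → (Matrix (ι → ZMod r) (ι → ZMod r) 𝔽)ˣ)
    (huC : ∀ t, (uC t : Matrix (ι → ZMod r) (ι → ZMod r) 𝔽)
      = lam • Matrix.of fun η ξ =>
          if ∀ i, i ≠ t → η i = ξ i then θ ^ (η t * ξ t).val else 0)
    (huU : ∀ t, (uU t : Matrix (ι → ZMod r) (ι → ZMod r) 𝔽)
      = Matrix.diagonal fun ξ => θ ^ ((ξ t).val * ((ξ t).val + r) / 2))
    (huD : ∀ s t : ι, s < t →
      (uD s t : Matrix (ι → ZMod r) (ι → ZMod r) 𝔽)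
        = Matrix.diagonal fun ξ => θ ^ (ξ s * ξ t).val)
    (G : Subgroup (Matrix (ι → ZMod r) (ι → ZMod r) 𝔽)ˣ)
    (hG : G = Subgroup.closure (Set.range uC ∪ Set.range uU ∪
      {x | ∃ s t : ι, s < t ∧ x = uD s t})) :
    ∀ g ∈ G, ((g : Matrix (ι → ZMod r) (ι → ZMod r) 𝔽).det) ^ r = 1 := by
  intro g hg
  have eq_fourierMatrix : Cb = fourierMatrix (AddChar.zmodChar r hθ.pow_eq_one) := by
    ext i j
    rw [hCb, fourierMatrix_zmodChar]
  have det_normalised : (lam • Cb).det = 1 := by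
    rw [hlam, eq_fourierMatrix]
    simpa only [ZMod.card] using det_smul_fourierMatrix_eq_one
      (AddChar.zmodChar_primitive_of_primitive_root r hθ) (by rwa [ZMod.card])
  rw [hG] at hg
  refine det_pow_eq_one_of_mem_closure ?_ hg
  rintro _ ((⟨t, rfl⟩ | ⟨t, rfl⟩) | ⟨s, t, hst, rfl⟩)
  · have eq_actOnCoord : (uC t : Matrix (ι → ZMod r) (ι → ZMod r) 𝔽) =
        actOnCoord t (lam • Cb) := by
      rw [huC, ← smul_actOnCoord]
      simp only [actOnCoord, hCb]
    rw [eq_actOnCoord, det_actOnCoord, det_normalised, one_pow, one_pow]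
  · rw [huU]
    exact det_diagonal_pow_pow_eq_one hθ.pow_eq_one _
  · rw [huD s t hst]
    exact det_diagonal_pow_pow_eq_one hθ.pow_eq_one _

/-- Every element of `G` has determinant an `r`-th root of unity. -/
theorem weil_detG_pow_r
    {r : ℕ} [Fact (Nat.Prime r)] (hr : Odd r)
    {𝔽 : Type*} [Field 𝔽] {θ : 𝔽} (hθ : IsPrimitiveRoot θ r)
    {ℓ : ℕ} (hℓ : 1 ≤ ℓ)
    (Cb : Matrix (ZMod r) (ZMod r) 𝔽)
    (hCb : ∀ i j : ZMod r, Cb i j = θ ^ (i * j).val)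
    (lam : 𝔽) (hlam : lam = (-(r : 𝔽)) ^ ((r - 1) / 2) * Cb.det⁻¹)
    (uC uU : Fin ℓ → (Matrix (Fin ℓ → ZMod r) (Fin ℓ → ZMod r) 𝔽)ˣ)
    (uD : Fin ℓ → Fin ℓ → (Matrix (Fin ℓ → ZMod r) (Fin ℓ → ZMod r) 𝔽)ˣ)
    (huC : ∀ t, (uC t : Matrix (Fin ℓ → ZMod r) (Fin ℓ → ZMod r) 𝔽)
      = lam • Matrix.of fun η ξ =>
          if ∀ i, i ≠ t → η i = ξ i then θ ^ (η t * ξ t).val else 0)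
    (huU : ∀ t, (uU t : Matrix (Fin ℓ → ZMod r) (Fin ℓ → ZMod r) 𝔽)
      = Matrix.diagonal fun ξ => θ ^ ((ξ t).val * ((ξ t).val + r) / 2))
    (huD : ∀ s t : Fin ℓ, s < t →
      (uD s t : Matrix (Fin ℓ → ZMod r) (Fin ℓ → ZMod r) 𝔽)
        = Matrix.diagonal fun ξ => θ ^ (ξ s * ξ t).val)
    (G : Subgroup (Matrix (Fin ℓ → ZMod r) (Fin ℓ → ZMod r) 𝔽)ˣ)
    (hG : G = Subgroup.closure (Set.range uC ∪ Set.range uU ∪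
      {x | ∃ s t : Fin ℓ, s < t ∧ x = uD s t})) :
    ∀ g ∈ G, ((g : Matrix (Fin ℓ → ZMod r) (Fin ℓ → ZMod r) 𝔽).det) ^ r = 1 := by
  exact weil_detG_pow_r_general hr hθ Cb hCb lam hlam uC uU uD
    (fun t => by convert huC t) huU huD G hG
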